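/- Let m ≥ 1 and let θ₀ : {1, …, 2m−1} → ℝ. Suppose (M⁺, N⁻) and (N⁺, M⁻) are meanders of size m that both have winding function θ₀. Then (M⁺, M⁻) is a meander of size m with winding function θ₀. Consequently, the set of meanders of size m with winding function θ₀ is a product set: it equals S⁺ × S⁻, where S⁺ (resp. S⁻) is the set of upper (resp. lower) matchings occurring in some meander of size m with winding function θ₀. -/

import Mathlib

/-!
Meanders of size `m`.  The point set `P = {1, …, 2m−1} ∪ {∞}` (ordered with `∞`
largest) is modeled as `Fin (n+1)` with `n = 2*m - 1`, the point `k` being index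
`k − 1` and `∞` being the last index `Fin.last n`.  A (perfect) matching is an
involution without fixed points, recorded via its partner function.
-/

namespace Meander

/-- A perfect matching of `Fin (n+1)`, given by its partner function: a fixed-point
free involution. -/
def IsMatching {n : ℕ} (M : Fin (n + 1) → Fin (n + 1)) : Prop :=
  Function.Involutive M ∧ ∀ x, M x ≠ x

/-- A matching is noncrossing if there are no two pairs `{a,b}`, `{c,d}` with
`a < c < b < d`. -/
def Noncrossing {n : ℕ} (M : Fin (n + 1) → Fin (n + 1)) : Prop :=
  ¬ ∃ a c : Fin (n + 1), a < c ∧ c < M a ∧ M a < M c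

/-- The graph on the point set whose edge set is `M⁺ ∪ M⁻`. -/
def meanderGraph {n : ℕ} (Mp Mm : Fin (n + 1) → Fin (n + 1)) :
    SimpleGraph (Fin (n + 1)) :=
  SimpleGraph.fromRel fun x y => Mp x = y ∨ Mm x = y

/-- A meander: a pair of noncrossing perfect matchings (upper `Mp`, lower `Mm`)
whose union is a connected graph. -/
def IsMeander {n : ℕ} (Mp Mm : Fin (n + 1) → Fin (n + 1)) : Prop :=
  IsMatching Mp ∧ Noncrossing Mp ∧ IsMatching Mm ∧ Noncrossing Mm ∧
    (meanderGraph Mp Mm).Connected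

/-- The traversal sequence: `v₀ = ∞`, and `v_{i+1}` is the `M⁻`-partner of `vᵢ`
if `i` is even and the `M⁺`-partner of `vᵢ` if `i` is odd. -/
def traversal {n : ℕ} (Mp Mm : Fin (n + 1) → Fin (n + 1)) : ℕ → Fin (n + 1)
  | 0 => Fin.last n
  | (i + 1) =>
      if i % 2 = 0 then Mm (traversal Mp Mm i) else Mp (traversal Mp Mm i)

/-- The winding increment `δᵢ`: `+π` if the step from `vᵢ` to `v_{i+1}` uses `M⁻`
(i.e. `i` even) and goes rightward, or uses `M⁺` (i.e. `i` odd) and goes leftward;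
`−π` otherwise. -/
noncomputable def windingStep {n : ℕ} (Mp Mm : Fin (n + 1) → Fin (n + 1))
    (i : ℕ) : ℝ :=
  if (i % 2 = 0 ∧ traversal Mp Mm i < traversal Mp Mm (i + 1)) ∨
      (i % 2 ≠ 0 ∧ traversal Mp Mm (i + 1) < traversal Mp Mm i)
  then Real.pi else -Real.pi

/-- The winding value along the traversal: `w₁ = 0` and `w_{i+1} = wᵢ + δᵢ`
(so `wᵢ = θ(vᵢ)` for `1 ≤ i`). -/
noncomputable def windingValue {n : ℕ} (Mp Mm : Fin (n + 1) → Fin (n + 1)) :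
    ℕ → ℝ
  | 0 => 0
  | 1 => 0
  | (i + 2) => windingValue Mp Mm (i + 1) + windingStep Mp Mm (i + 1)

/-- `θ : {1, …, n} → ℝ` is the winding function of `(Mp, Mm)`: for `1 ≤ i ≤ n`
the traversal point `vᵢ` is not `∞` and `θ(vᵢ)` equals the winding value `wᵢ`. -/
def IsWindingFunction {n : ℕ} (Mp Mm : Fin (n + 1) → Fin (n + 1))
    (θ : Fin n → ℝ) : Prop :=
  ∀ i : ℕ, 1 ≤ i → i ≤ n →
    ∃ h : (traversal Mp Mm i : ℕ) < n,
      θ ⟨(traversal Mp Mm i : ℕ), h⟩ = windingValue Mp Mm i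

end Meander

/-!
Extend `θ` to `∞` by `θ(∞) = π`. That `θ` is the winding function of `(M⁺, M⁻)` then says exactly
that `θ` rises by `π` along every lower arc read rightward, and falls by `π` along every upper arc
read rightward that avoids `∞`: one condition on `M⁺` and one on `M⁻`. It remains to see that two
noncrossing matchings satisfying these conditions for the same `θ` form a connected graph. A
component avoiding `∞` would be a simple closed curve whose tangent angle returns to its initial
value, whereas the total turning of such a curve is `± 2π`. This last fact is proved by shrinking
the curve: an innermost upper arc is contracted together with the two lower arcs at its ends.
-/

namespace Meander

section Separation

variable {α : Type*} [LinearOrder α] {a b i j p q x : α}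

lemma mem_uIoo_iff : x ∈ Set.uIoo a b ↔ a < x ∧ x < b ∨ b < x ∧ x < a := by
  rcases le_total a b with hab | hab
  · grind [Set.uIoo_of_le hab]
  · grind [Set.uIoo_of_ge hab]

lemma mem_uIoo_iff_mem_uIoo_of_notMem (hpi : p ≠ i) (hpj : p ≠ j) (hqi : q ≠ i) (hqj : q ≠ j)
    (hp : p ∉ Set.uIoo i j) (hq : q ∉ Set.uIoo i j) :
    i ∈ Set.uIoo p q ↔ j ∈ Set.uIoo p q := by
  simp only [mem_uIoo_iff] at *
  grind

lemma mem_uIoo_iff_xor_of_notMem (hi : x ≠ i) (hj : x ≠ j) (ha : x ≠ a) (hb : x ≠ b)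
    (hx : x ∉ Set.uIoo i j) :
    x ∈ Set.uIoo a b ↔ Xor (x ∈ Set.uIoo i a) (x ∈ Set.uIoo j b) := by
  simp only [mem_uIoo_iff, Xor] at *
  grind

end Separation

section Arcs

variable {α G : Type*} [LinearOrder α] [AddCommGroup G]
  {S : Finset α} {M U L : α → α} {h : α → G} {c : G} {i j x y : α}

/-- A noncrossing perfect matching of the finite set `S`, given by its partner function. Noncrossing
is expressed as: an arc starting under another arc also ends under it. -/
structure IsNoncrossingMatchingOn (S : Finset α) (M : α → α) : Prop where
  map_mem : ∀ ⦃x⦄, x ∈ S → M x ∈ S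
  map_map : ∀ ⦃x⦄, x ∈ S → M (M x) = x
  map_ne : ∀ ⦃x⦄, x ∈ S → M x ≠ x
  map_mem_uIoo : ∀ ⦃p⦄, p ∈ S → ∀ ⦃x⦄, x ∈ S → x ∈ Set.uIoo p (M p) → M x ∈ Set.uIoo p (M p)

/-- The change of the tangent angle along a half-turn from `x` to `y`, where `c` is the change along
a half-turn to the right. -/
def turn (c : G) (x y : α) : G := if x < y then c else -c

lemma turn_swap (hxy : x ≠ y) : turn c y x = -turn c x y := by
  rcases hxy.lt_or_gt with hlt | hlt <;> simp [turn, hlt, hlt.not_gt]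

/-- `h` is a tangent angle along the arc of `M` at `x`, read from `x` to `M x`. -/
def TurnsAt (c : G) (h : α → G) (M : α → α) (x : α) : Prop :=
  h (M x) = h x + turn c x (M x)

lemma TurnsAt.map (hx : TurnsAt c h M x) (hMx : M x ≠ x) (hMMx : M (M x) = x) :
    TurnsAt c h M (M x) := by
  rw [TurnsAt, hMMx, hx, turn_swap hMx.symm, add_neg_cancel_right]

namespace IsNoncrossingMatchingOn

lemma map_mem_uIoo_iff (hM : IsNoncrossingMatchingOn S M) (hi : i ∈ S) (hx : x ∈ S) :
    M x ∈ Set.uIoo i (M i) ↔ x ∈ Set.uIoo i (M i) :=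
  ⟨fun hMx => hM.map_map hx ▸ hM.map_mem_uIoo hi (hM.map_mem hx) hMx, hM.map_mem_uIoo hi hx⟩

lemma map_eq_iff (hM : IsNoncrossingMatchingOn S M) (hx : x ∈ S) (hy : y ∈ S) :
    M x = y ↔ x = M y := by
  constructor
  · rintro rfl; exact (hM.map_map hx).symm
  · rintro rfl; exact hM.map_map hy

lemma map_inj (hM : IsNoncrossingMatchingOn S M) (hx : x ∈ S) (hy : y ∈ S) :
    M x = M y ↔ x = y := by
  rw [hM.map_eq_iff hx (hM.map_mem hy), hM.map_map hy]

lemma exists_innermost (hM : IsNoncrossingMatchingOn S M) (hS : S.Nonempty) :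
    ∃ i ∈ S, i < M i ∧ ∀ x ∈ S, x ∉ Set.uIoo i (M i) := by
  have hopen : {x ∈ S | x < M x}.Nonempty := by
    obtain ⟨x, hx⟩ := hS
    rcases (hM.map_ne hx).lt_or_gt with hlt | hlt
    · exact ⟨M x, by simpa [hM.map_mem hx, hM.map_map hx] using hlt⟩
    · exact ⟨x, by simpa [hx] using hlt⟩
  obtain ⟨i, hi, hmax⟩ := Finset.exists_max_image _ id hopen
  simp only [Finset.mem_filter, id_eq, and_imp] at hi hmax
  refine ⟨i, hi.1, hi.2, fun x hx hbetween => ?_⟩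
  -- Of the two ends of an arc nested under the last arc to open, one opens even later.
  have hMbetween := hM.map_mem_uIoo hi.1 hx hbetween
  rw [Set.uIoo_of_lt hi.2] at hbetween hMbetween
  rcases (hM.map_ne hx).lt_or_gt with hlt | hlt
  · exact (hmax (M x) (hM.map_mem hx) (by rwa [hM.map_map hx])).not_gt hMbetween.1
  · exact (hmax x hx hlt).not_gt hbetween.1

lemma sdiff_arc (hM : IsNoncrossingMatchingOn S M) (hi : i ∈ S) :
    IsNoncrossingMatchingOn (S \ {i, M i}) M := by
  have hsub : S \ {i, M i} ⊆ S := Finset.sdiff_subset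
  refine ⟨fun x hx => ?_, fun x hx => hM.map_map (hsub hx), fun x hx => hM.map_ne (hsub hx),
    fun p hp x hx => hM.map_mem_uIoo (hsub hp) (hsub hx)⟩
  have hxS := hsub hx
  simp only [Finset.mem_sdiff, Finset.mem_insert, Finset.mem_singleton, not_or] at hx ⊢
  rw [hM.map_eq_iff hxS hi, hM.map_inj hxS hi]
  exact ⟨hM.map_mem hxS, hx.2.2, hx.2.1⟩

end IsNoncrossingMatchingOn

/-- The matching obtained from `M` by deleting `i` and `j` and joining their former partners. -/
def contract (M : α → α) (i j : α) : α → α :=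
  Function.update (Function.update M (M i) (M j)) (M j) (M i)

lemma contract_apply_cases (hij : M i ≠ M j) (x : α) :
    x = M i ∧ contract M i j x = M j ∨ x = M j ∧ contract M i j x = M i ∨
      x ≠ M i ∧ x ≠ M j ∧ contract M i j x = M x := by
  simp only [contract, Function.update_apply]
  grind

namespace IsNoncrossingMatchingOn

lemma mem_uIoo_map_map_iff (hM : IsNoncrossingMatchingOn S M) (hi : i ∈ S) (hj : j ∈ S)
    (hadj : ∀ x ∈ S, x ∉ Set.uIoo i j) (hx : x ∈ S)
    (hxi : x ≠ i) (hxj : x ≠ j) (hxMi : x ≠ M i) (hxMj : x ≠ M j) :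
    M x ∈ Set.uIoo (M i) (M j) ↔ x ∈ Set.uIoo (M i) (M j) := by
  have hMx := hM.map_mem hx
  rw [mem_uIoo_iff_xor_of_notMem hxi hxj hxMi hxMj (hadj x hx),
    mem_uIoo_iff_xor_of_notMem _ _ _ _ (hadj _ hMx), hM.map_mem_uIoo_iff hi hx,
    hM.map_mem_uIoo_iff hj hx]
  · rwa [Ne, hM.map_eq_iff hx hi]
  · rwa [Ne, hM.map_eq_iff hx hj]
  · rwa [Ne, hM.map_inj hx hi]
  · rwa [Ne, hM.map_inj hx hj]

lemma map_mem_uIoo_iff_of_adjacent (hM : IsNoncrossingMatchingOn S M) (hi : i ∈ S) (hj : j ∈ S)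
    (hadj : ∀ x ∈ S, x ∉ Set.uIoo i j) (hx : x ∈ S)
    (hxi : x ≠ i) (hxj : x ≠ j) (hxMi : x ≠ M i) (hxMj : x ≠ M j) :
    M i ∈ Set.uIoo x (M x) ↔ M j ∈ Set.uIoo x (M x) := by
  have hMx := hM.map_mem hx
  rw [hM.map_mem_uIoo_iff hx hi, hM.map_mem_uIoo_iff hx hj]
  refine mem_uIoo_iff_mem_uIoo_of_notMem hxi hxj ?_ ?_ (hadj x hx) (hadj _ hMx)
  · rwa [Ne, hM.map_eq_iff hx hi]
  · rwa [Ne, hM.map_eq_iff hx hj]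

lemma contract_mem_uIoo (hM : IsNoncrossingMatchingOn S M) (hi : i ∈ S) (hj : j ∈ S)
    (hMij : M i ≠ M j) (hadj : ∀ x ∈ S, x ∉ Set.uIoo i j) {p : α} (hp : p ∈ S \ {i, j})
    (hx : x ∈ S \ {i, j}) (hbetween : x ∈ Set.uIoo p (contract M i j p)) :
    contract M i j x ∈ Set.uIoo p (contract M i j p) := by
  simp only [Finset.mem_sdiff, Finset.mem_insert, Finset.mem_singleton, not_or] at hp hx
  obtain ⟨hpS, hpi, hpj⟩ := hp
  obtain ⟨hxS, hxi, hxj⟩ := hx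
  have hxp := ne_of_mem_of_not_mem hbetween Set.left_notMem_uIoo
  have hxcp := ne_of_mem_of_not_mem hbetween Set.right_notMem_uIoo
  rcases contract_apply_cases hMij p with ⟨rfl, hcp⟩ | ⟨rfl, hcp⟩ | ⟨hpMi, hpMj, hcp⟩ <;>
    rw [hcp] at hbetween hxcp ⊢ <;>
    rcases contract_apply_cases hMij x with ⟨rfl, hcx⟩ | ⟨rfl, hcx⟩ | ⟨hxMi, hxMj, hcx⟩ <;>
    try contradiction
  all_goals rw [hcx]
  · exact (hM.mem_uIoo_map_map_iff hi hj hadj hxS hxi hxj hxMi hxMj).2 hbetween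
  · rw [Set.uIoo_comm] at hbetween ⊢
    exact (hM.mem_uIoo_map_map_iff hi hj hadj hxS hxi hxj hxMi hxMj).2 hbetween
  · exact (hM.map_mem_uIoo_iff_of_adjacent hi hj hadj hpS hpi hpj hpMi hpMj).1 hbetween
  · exact (hM.map_mem_uIoo_iff_of_adjacent hi hj hadj hpS hpi hpj hpMi hpMj).2 hbetween
  · exact hM.map_mem_uIoo hpS hxS hbetween

lemma contract (hM : IsNoncrossingMatchingOn S M) (hi : i ∈ S) (hj : j ∈ S) (hij : i ≠ j)
    (hMij : M i ≠ j) (hadj : ∀ x ∈ S, x ∉ Set.uIoo i j) :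
    IsNoncrossingMatchingOn (S \ {i, j}) (contract M i j) := by
  have hne : M i ≠ M j := (hM.map_inj hi hj).not.2 hij
  have hMji : M j ≠ i := (hM.map_eq_iff hj hi).not.2 hMij.symm
  have hcases := contract_apply_cases hne
  have hmem := hM.map_mem
  have hmap := hM.map_map
  have hmap_ne := hM.map_ne
  refine ⟨fun x hx => ?_, fun x hx => ?_, fun x hx => ?_,
    fun p hp x hx => hM.contract_mem_uIoo hi hj hne hadj hp hx⟩ <;>
    simp only [Finset.mem_sdiff, Finset.mem_insert, Finset.mem_singleton, not_or] at hx ⊢ <;>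
    grind

lemma adjacent_arcs_cases (hM : IsNoncrossingMatchingOn S M) (hi : i ∈ S) (hj : j ∈ S) (hij : i < j)
    (hMij : M i ≠ j) (hadj : ∀ x ∈ S, x ∉ Set.uIoo i j) :
    M i < i ∧ j < M j ∨ M j < M i ∧ (M i < i ∧ M j < j ∨ i < M i ∧ j < M j) := by
  have hMi := hM.map_mem hi
  have hMj := hM.map_mem hj
  have hi_under := hM.map_mem_uIoo hj hi
  have hj_under := hM.map_mem_uIoo hi hj
  have hMi_under := hM.map_mem_uIoo hj hMi
  have hMj_under := hM.map_mem_uIoo hi hMj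
  have hMi_adj := hadj _ hMi
  have hMj_adj := hadj _ hMj
  rw [hM.map_map hi] at hMi_under
  rw [hM.map_map hj] at hMj_under
  simp only [mem_uIoo_iff] at *
  grind [hM.map_inj hi hj, hM.map_eq_iff hj hi, hM.map_ne hi, hM.map_ne hj]

end IsNoncrossingMatchingOn

lemma turn_add_turn_add_turn (hM : IsNoncrossingMatchingOn S M) (hi : i ∈ S) (hj : j ∈ S)
    (hij : i < j) (hMij : M i ≠ j) (hadj : ∀ x ∈ S, x ∉ Set.uIoo i j) :
    turn c (M i) i + turn (-c) i j + turn c j (M j) = turn c (M i) (M j) := by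
  rcases hM.adjacent_arcs_cases hi hj hij hMij hadj with
    ⟨hMi, hMj⟩ | ⟨hlt, ⟨hMi, hMj⟩ | ⟨hMi, hMj⟩⟩
  · simp [turn, hMi, hij, hMj, (hMi.trans hij).trans hMj]
  · simp [turn, hMi, hij, hMj.not_gt, hlt.not_gt]
  · simp [turn, hMi.not_gt, hij, hMj, hlt.not_gt]

lemma turnsAt_contract (hM : IsNoncrossingMatchingOn S M) (hi : i ∈ S) (hj : j ∈ S) (hij : i < j)
    (hMij : M i ≠ j) (hadj : ∀ x ∈ S, x ∉ Set.uIoo i j) (hMh : ∀ x ∈ S, TurnsAt c h M x)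
    (hh : h j = h i + turn (-c) i j) (hx : x ∈ S) : TurnsAt c h (contract M i j) x := by
  have hne : M i ≠ M j := (hM.map_inj hi hj).not.2 hij.ne
  have hleft : contract M i j (M i) = M j := by
    simp [contract, hne]
  have hright : contract M i j (M j) = M i := by
    simp [contract]
  have hMi : TurnsAt c h (contract M i j) (M i) := by
    have hturn : h i = h (M i) + turn c (M i) i := by
      simpa only [TurnsAt, hM.map_map hi] using hMh _ (hM.map_mem hi)
    calc h (contract M i j (M i))
        = h (M i) + (turn c (M i) i + turn (-c) i j + turn c j (M j)) := by
          rw [hleft, hMh j hj, hh, hturn]; abel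
      _ = h (M i) + turn c (M i) (contract M i j (M i)) := by
          rw [turn_add_turn_add_turn hM hi hj hij hMij hadj, hleft]
  rcases contract_apply_cases hne x with ⟨rfl, -⟩ | ⟨rfl, -⟩ | ⟨-, -, hcx⟩
  · exact hMi
  · simpa only [hleft] using hMi.map (hleft.trans_ne hne.symm) (hleft.symm ▸ hright)
  · rw [TurnsAt, hcx]
    exact hMh x hx

theorem eq_empty_of_turnsAt (hc : c + c ≠ 0) (hU : IsNoncrossingMatchingOn S U)
    (hL : IsNoncrossingMatchingOn S L) (hUh : ∀ x ∈ S, TurnsAt (-c) h U x)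
    (hLh : ∀ x ∈ S, TurnsAt c h L x) : S = ∅ := by
  induction S using Finset.strongInduction generalizing L with
  | H S ih =>
  by_contra hS
  obtain ⟨i, hi, hij, hadj⟩ := hU.exists_innermost (Finset.nonempty_iff_ne_empty.2 hS)
  have hUi := hU.map_mem hi
  have hupper : h (U i) = h i + turn (-c) i (U i) := hUh i hi
  by_cases hLi : L i = U i
  · have hlower : h (L i) = h i + turn c i (L i) := hLh i hi
    rw [hLi, hupper, turn, turn, if_pos hij, if_pos hij, add_right_inj] at hlower
    exact hc (neg_eq_iff_add_eq_zero.1 hlower)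
  · have hempty : S \ {i, U i} = ∅ :=
      ih _ (Finset.sdiff_ssubset (by grind) (by simp)) (hU.sdiff_arc hi)
        (hL.contract hi hUi hij.ne hLi hadj) (fun x hx => hUh x (Finset.sdiff_subset hx))
        (fun x hx =>
          turnsAt_contract hL hi hUi hij hLi hadj hLh hupper (Finset.sdiff_subset hx))
    have hLi_mem : L i ∈ S \ {i, U i} := by simp [hL.map_mem hi, hL.map_ne hi, hLi]
    simp [hempty] at hLi_mem

end Arcs

section Traversal

variable {n : ℕ} {Mp Mm : Fin (n + 1) → Fin (n + 1)} {i j k : ℕ} {x y : Fin (n + 1)}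

/-- The matching followed by the `i`-th step of the traversal. -/
def matchingAt (Mp Mm : Fin (n + 1) → Fin (n + 1)) (i : ℕ) : Fin (n + 1) → Fin (n + 1) :=
  if i % 2 = 0 then Mm else Mp

lemma matchingAt_of_even (hi : Even i) : matchingAt Mp Mm i = Mm :=
  if_pos (Nat.even_iff.1 hi)

lemma matchingAt_of_odd (hi : Odd i) : matchingAt Mp Mm i = Mp :=
  if_neg (by simp [Nat.odd_iff.1 hi])

lemma matchingAt_add_of_even (hk : Even k) : matchingAt Mp Mm (i + k) = matchingAt Mp Mm i := by
  rw [matchingAt, matchingAt, Nat.add_mod, Nat.even_iff.1 hk, add_zero, Nat.mod_mod]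

lemma isMatching_matchingAt (hp : IsMatching Mp) (hm : IsMatching Mm) (i : ℕ) :
    IsMatching (matchingAt Mp Mm i) := by
  unfold matchingAt
  split_ifs <;> assumption

lemma traversal_succ (i : ℕ) :
    traversal Mp Mm (i + 1) = matchingAt Mp Mm i (traversal Mp Mm i) := by
  rw [traversal, matchingAt]
  split_ifs <;> rfl

lemma traversal_succ_of_odd (hi : Odd i) :
    traversal Mp Mm (i + 1) = Mp (traversal Mp Mm i) := by
  rw [traversal_succ, matchingAt_of_odd hi]

lemma matchingAt_traversal_succ (hp : IsMatching Mp) (hm : IsMatching Mm) (i : ℕ) :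
    matchingAt Mp Mm i (traversal Mp Mm (i + 1)) = traversal Mp Mm i := by
  rw [traversal_succ, (isMatching_matchingAt hp hm i).1]

lemma traversal_succ_ne (hp : IsMatching Mp) (hm : IsMatching Mm) (i : ℕ) :
    traversal Mp Mm (i + 1) ≠ traversal Mp Mm i := by
  rw [traversal_succ]
  exact (isMatching_matchingAt hp hm i).2 _

lemma traversal_add_ne_of_odd (hp : IsMatching Mp) (hm : IsMatching Mm) (hk : Odd k) (i : ℕ) :
    traversal Mp Mm (i + k) ≠ traversal Mp Mm i := by
  obtain ⟨d, rfl⟩ := hk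
  induction d generalizing i with
  | zero => exact traversal_succ_ne hp hm i
  | succ d ih =>
    -- Equal points at both ends force equal points one step further in.
    intro heq
    apply ih (i + 1)
    calc traversal Mp Mm (i + 1 + (2 * d + 1))
        = matchingAt Mp Mm (i + 2 * (d + 1)) (traversal Mp Mm (i + 2 * (d + 1) + 1)) := by
          rw [matchingAt_traversal_succ hp hm]; congr 1; ring
      _ = traversal Mp Mm (i + 1) := by
          rw [matchingAt_add_of_even (even_two_mul _), add_assoc, heq, traversal_succ]

lemma traversal_add_eq_iff_of_even (hp : IsMatching Mp) (hm : IsMatching Mm) (hk : Even k) (i : ℕ) :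
    traversal Mp Mm (i + k) = traversal Mp Mm i ↔ traversal Mp Mm k = Fin.last n := by
  induction i with
  | zero => rw [zero_add, traversal]
  | succ i ih =>
    rw [Nat.add_right_comm, traversal_succ, traversal_succ, matchingAt_add_of_even hk,
      (isMatching_matchingAt hp hm i).1.injective.eq_iff, ih]

lemma even_of_traversal_eq_last (hp : IsMatching Mp) (hm : IsMatching Mm)
    (hk : traversal Mp Mm k = Fin.last n) : Even k := by
  by_contra hodd
  apply traversal_add_ne_of_odd hp hm (Nat.not_even_iff_odd.1 hodd) 0
  rwa [zero_add]

lemma traversal_periodic (hp : IsMatching Mp) (hm : IsMatching Mm)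
    (hk : traversal Mp Mm k = Fin.last n) : Function.Periodic (traversal Mp Mm) k := fun i =>
  (traversal_add_eq_iff_of_even hp hm (even_of_traversal_eq_last hp hm hk) i).2 hk

lemma traversal_sub_eq_last (hp : IsMatching Mp) (hm : IsMatching Mm) (hij : i ≤ j)
    (heq : traversal Mp Mm j = traversal Mp Mm i) : traversal Mp Mm (j - i) = Fin.last n := by
  obtain ⟨k, rfl⟩ := Nat.exists_eq_add_of_le hij
  rw [Nat.add_sub_cancel_left]
  rcases Nat.even_or_odd k with hk | hk
  · exact (traversal_add_eq_iff_of_even hp hm hk i).1 heq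
  · exact absurd heq (traversal_add_ne_of_odd hp hm hk i)

lemma meanderGraph_adj_iff (hp : IsMatching Mp) (hm : IsMatching Mm) :
    (meanderGraph Mp Mm).Adj x y ↔ y = Mp x ∨ y = Mm x := by
  have hpy : Mp y = x ↔ y = Mp x := hp.1.eq_iff
  have hmy : Mm y = x ↔ y = Mm x := hm.1.eq_iff
  simp only [meanderGraph, SimpleGraph.fromRel_adj, hpy, hmy]
  grind [hp.2 x, hm.2 x]

lemma eq_univ_of_connected (hp : IsMatching Mp) (hm : IsMatching Mm)
    (hconn : (meanderGraph Mp Mm).Connected) {S : Set (Fin (n + 1))} (hS : S.Nonempty)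
    (hSp : ∀ x ∈ S, Mp x ∈ S) (hSm : ∀ x ∈ S, Mm x ∈ S) : S = Set.univ := by
  obtain ⟨x, hx⟩ := hS
  refine Set.eq_univ_of_forall fun y => ?_
  have hreach := (SimpleGraph.reachable_iff_reflTransGen x y).1 (hconn.preconnected x y)
  induction hreach with
  | refl => exact hx
  | tail _ hadj hmem =>
    rcases (meanderGraph_adj_iff hp hm).1 hadj with rfl | rfl
    · exact hSp _ hmem
    · exact hSm _ hmem

lemma matchingAt_eq_or_eq_succ (i j : ℕ) :
    matchingAt Mp Mm j = matchingAt Mp Mm i ∨ matchingAt Mp Mm j = matchingAt Mp Mm (i + 1) := by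
  unfold matchingAt
  grind

lemma matchingAt_mem_range_traversal (hp : IsMatching Mp) (hm : IsMatching Mm) (hk : 0 < k)
    (hper : Function.Periodic (traversal Mp Mm) k) (j : ℕ)
    (hx : x ∈ Set.range (traversal Mp Mm)) :
    matchingAt Mp Mm j x ∈ Set.range (traversal Mp Mm) := by
  obtain ⟨i, rfl⟩ := hx
  obtain ⟨l, hl⟩ := Nat.exists_eq_add_one_of_ne_zero (Nat.add_pos_right i hk).ne'
  rw [← hper i, hl]
  rcases matchingAt_eq_or_eq_succ l j with hj | hj <;> rw [hj]
  · exact ⟨l, (matchingAt_traversal_succ hp hm l).symm⟩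
  · exact ⟨l + 2, traversal_succ (l + 1)⟩

lemma lt_of_traversal_eq_last (hp : IsMatching Mp) (hm : IsMatching Mm)
    (hconn : (meanderGraph Mp Mm).Connected) (hk : 0 < k)
    (hlast : traversal Mp Mm k = Fin.last n) : n < k := by
  have hper := traversal_periodic hp hm hlast
  have hclosed := fun j x => matchingAt_mem_range_traversal (x := x) hp hm hk hper j
  have hrange : Set.range (traversal Mp Mm) = Set.univ :=
    eq_univ_of_connected hp hm hconn (Set.range_nonempty _) (hclosed 1) (hclosed 0)
  have hsurj : Function.Surjective fun i : Fin k => traversal Mp Mm i := by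
    intro x
    obtain ⟨i, rfl⟩ := Set.range_eq_univ.1 hrange x
    exact ⟨⟨i % k, Nat.mod_lt i hk⟩, hper.map_mod_nat i⟩
  simpa using Fintype.card_le_of_surjective _ hsurj

lemma traversal_injective (hp : IsMatching Mp) (hm : IsMatching Mm)
    (hconn : (meanderGraph Mp Mm).Connected) :
    Function.Injective fun i : Fin (n + 1) => traversal Mp Mm i := by
  refine Function.Injective.of_lt_imp_ne fun i j hij heq => ?_
  have hlast := traversal_sub_eq_last hp hm hij.le heq.symm
  have := lt_of_traversal_eq_last hp hm hconn (Nat.sub_pos_of_lt hij) hlast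
  omega

lemma exists_traversal_eq (hp : IsMatching Mp) (hm : IsMatching Mm)
    (hconn : (meanderGraph Mp Mm).Connected) (x : Fin (n + 1)) :
    ∃ i ≤ n, traversal Mp Mm i = x := by
  obtain ⟨i, hi⟩ := Finite.injective_iff_surjective.1 (traversal_injective hp hm hconn) x
  exact ⟨i, Nat.le_of_lt_succ i.isLt, hi⟩

lemma traversal_card_eq_last (hp : IsMatching Mp) (hm : IsMatching Mm)
    (hconn : (meanderGraph Mp Mm).Connected) : traversal Mp Mm (n + 1) = Fin.last n := by
  obtain ⟨i, hi, heq⟩ := exists_traversal_eq hp hm hconn (traversal Mp Mm (n + 1))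
  have hlast := traversal_sub_eq_last hp hm (Nat.le_succ_of_le hi) heq.symm
  have hlt := lt_of_traversal_eq_last hp hm hconn (by omega) hlast
  obtain rfl : i = 0 := by omega
  exact heq.symm

lemma traversal_ne_last (hp : IsMatching Mp) (hm : IsMatching Mm)
    (hconn : (meanderGraph Mp Mm).Connected) (hi : 0 < i) (hin : i ≤ n) :
    traversal Mp Mm i ≠ Fin.last n :=
  fun hlast => (lt_of_traversal_eq_last hp hm hconn hi hlast).not_ge hin

end Traversal

section Winding

variable {n : ℕ} {Mp Mm : Fin (n + 1) → Fin (n + 1)} {θ : Fin n → ℝ} {i : ℕ} {x : Fin (n + 1)}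

/-- The extension of `θ` to `∞`. The value `π` makes the lower arc at `∞`, along which the traversal
starts, obey the same rule as all other lower arcs. -/
noncomputable def extendedAngle (θ : Fin n → ℝ) : Fin (n + 1) → ℝ :=
  Fin.snoc (α := fun _ => ℝ) θ Real.pi

lemma extendedAngle_last : extendedAngle θ (Fin.last n) = Real.pi :=
  Fin.snoc_last (α := fun _ => ℝ) ..

lemma extendedAngle_of_lt (hx : (x : ℕ) < n) : extendedAngle θ x = θ ⟨x, hx⟩ := by
  simp [extendedAngle, Fin.snoc, hx, Fin.castLT]

/-- The change of the tangent angle along the `i`-th arc of the traversal if that arc is run through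
rightward. -/
noncomputable def turnAt (i : ℕ) : ℝ :=
  if i % 2 = 0 then Real.pi else -Real.pi

lemma turnAt_of_even (hi : Even i) : turnAt i = Real.pi :=
  if_pos (Nat.even_iff.1 hi)

lemma turnAt_of_odd (hi : Odd i) : turnAt i = -Real.pi :=
  if_neg (by simp [Nat.odd_iff.1 hi])

lemma windingStep_eq_turn (hp : IsMatching Mp) (hm : IsMatching Mm) (i : ℕ) :
    windingStep Mp Mm i = turn (turnAt i) (traversal Mp Mm i) (traversal Mp Mm (i + 1)) := by
  have hne := traversal_succ_ne hp hm i
  unfold windingStep turn turnAt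
  grind

lemma windingStep_zero : windingStep Mp Mm 0 = -Real.pi := by
  simp [windingStep, traversal, Fin.le_last]

lemma isWindingFunction_iff_forall_windingValue
    (hne : ∀ i, 0 < i → i ≤ n → traversal Mp Mm i ≠ Fin.last n) :
    IsWindingFunction Mp Mm θ ↔ ∀ i, 0 < i → i ≤ n →
      extendedAngle θ (traversal Mp Mm i) = windingValue Mp Mm i := by
  refine forall₃_congr fun i hi hin => ?_
  have hlt : (traversal Mp Mm i : ℕ) < n := Fin.val_lt_last (hne i hi hin)
  rw [extendedAngle_of_lt hlt, exists_prop_of_true hlt]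

lemma isWindingFunction_iff_forall_windingStep
    (hne : ∀ i, 0 < i → i ≤ n → traversal Mp Mm i ≠ Fin.last n) :
    IsWindingFunction Mp Mm θ ↔ ∀ i < n, extendedAngle θ (traversal Mp Mm (i + 1)) =
      extendedAngle θ (traversal Mp Mm i) + windingStep Mp Mm i := by
  have hzero : windingValue Mp Mm 1 =
      extendedAngle θ (traversal Mp Mm 0) + windingStep Mp Mm 0 := by
    rw [traversal, extendedAngle_last, windingStep_zero, windingValue, add_neg_cancel]
  rw [isWindingFunction_iff_forall_windingValue hne]
  constructor
  · rintro hvalue (_ | i) hi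
    · rw [hvalue 1 one_pos hi, hzero]
    · rw [hvalue (i + 1) i.succ_pos hi.le, hvalue (i + 2) (by omega) hi, windingValue]
  · intro hstep i hi hin
    induction i, hi using Nat.le_induction with
    | base => rw [hstep 0 hin, hzero]
    | succ i hi ih =>
      obtain ⟨l, rfl⟩ := Nat.exists_eq_add_of_le' hi
      rw [hstep (l + 1) hin, ih (by omega), windingValue]

lemma isWindingFunction_iff_forall_turnsAt_traversal (hp : IsMatching Mp) (hm : IsMatching Mm)
    (hconn : (meanderGraph Mp Mm).Connected) :
    IsWindingFunction Mp Mm θ ↔ ∀ i < n,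
      TurnsAt (turnAt i) (extendedAngle θ) (matchingAt Mp Mm i) (traversal Mp Mm i) := by
  rw [isWindingFunction_iff_forall_windingStep fun i => traversal_ne_last hp hm hconn]
  simp only [windingStep_eq_turn hp hm, TurnsAt, traversal_succ]

/-- The rule obeyed by a lower matching of a meander with winding function `θ`. -/
def LowerArcsTurn (θ : Fin n → ℝ) (Mm : Fin (n + 1) → Fin (n + 1)) : Prop :=
  ∀ x, TurnsAt Real.pi (extendedAngle θ) Mm x

/-- The rule obeyed by an upper matching of a meander with winding function `θ`. The upper arc at
`∞` closes the traversal and is exempt. -/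
def UpperArcsTurn (θ : Fin n → ℝ) (Mp : Fin (n + 1) → Fin (n + 1)) : Prop :=
  ∀ x, x ≠ Fin.last n → Mp x ≠ Fin.last n → TurnsAt (-Real.pi) (extendedAngle θ) Mp x

lemma turnsAt_matchingAt_traversal_succ {c : ℝ} {h : Fin (n + 1) → ℝ} (hp : IsMatching Mp)
    (hm : IsMatching Mm)
    (hi : TurnsAt c h (matchingAt Mp Mm i) (traversal Mp Mm i)) :
    TurnsAt c h (matchingAt Mp Mm i) (traversal Mp Mm (i + 1)) := by
  have hM := isMatching_matchingAt hp hm i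
  rw [traversal_succ]
  exact hi.map (hM.2 _) (hM.1 _)

lemma lowerArcsTurn_of_forall_traversal (hp : IsMatching Mp) (hm : IsMatching Mm)
    (hconn : (meanderGraph Mp Mm).Connected)
    (hturn : ∀ i < n,
      TurnsAt (turnAt i) (extendedAngle θ) (matchingAt Mp Mm i) (traversal Mp Mm i)) :
    LowerArcsTurn θ Mm := by
  have heven : Even (n + 1) :=
    even_of_traversal_eq_last hp hm (traversal_card_eq_last hp hm hconn)
  have hlower : ∀ i < n, Even i → TurnsAt Real.pi (extendedAngle θ) Mm (traversal Mp Mm i) ∧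
      TurnsAt Real.pi (extendedAngle θ) Mm (traversal Mp Mm (i + 1)) := by
    intro i hin hi
    have h := hturn i hin
    have h' := turnsAt_matchingAt_traversal_succ hp hm h
    rw [matchingAt_of_even hi, turnAt_of_even hi] at h h'
    exact ⟨h, h'⟩
  intro x
  obtain ⟨i, hin, rfl⟩ := exists_traversal_eq hp hm hconn x
  rcases Nat.even_or_odd' i with ⟨l, rfl | rfl⟩
  · exact (hlower (2 * l) (by grind) (even_two_mul l)).1
  · exact (hlower (2 * l) hin (even_two_mul l)).2

lemma upperArcsTurn_of_forall_traversal (hp : IsMatching Mp) (hm : IsMatching Mm)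
    (hconn : (meanderGraph Mp Mm).Connected)
    (hturn : ∀ i < n,
      TurnsAt (turnAt i) (extendedAngle θ) (matchingAt Mp Mm i) (traversal Mp Mm i)) :
    UpperArcsTurn θ Mp := by
  have hupper : ∀ i < n, Odd i → TurnsAt (-Real.pi) (extendedAngle θ) Mp (traversal Mp Mm i) ∧
      TurnsAt (-Real.pi) (extendedAngle θ) Mp (traversal Mp Mm (i + 1)) := by
    intro i hin hi
    have h := hturn i hin
    have h' := turnsAt_matchingAt_traversal_succ hp hm h
    rw [matchingAt_of_odd hi, turnAt_of_odd hi] at h h'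
    exact ⟨h, h'⟩
  intro x hx hMx
  obtain ⟨i, hin, rfl⟩ := exists_traversal_eq hp hm hconn x
  rcases Nat.even_or_odd i with hi | hi
  · obtain ⟨l, rfl⟩ := Nat.exists_eq_add_one_of_ne_zero (n := i) (by rintro rfl; exact hx rfl)
    exact (hupper l hin (by grind)).2
  · refine (hupper i (lt_of_le_of_ne hin ?_) hi).1
    rintro rfl
    exact hMx ((traversal_succ_of_odd hi).symm.trans (traversal_card_eq_last hp hm hconn))

theorem isWindingFunction_iff (hp : IsMatching Mp) (hm : IsMatching Mm)
    (hconn : (meanderGraph Mp Mm).Connected) :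
    IsWindingFunction Mp Mm θ ↔ UpperArcsTurn θ Mp ∧ LowerArcsTurn θ Mm := by
  rw [isWindingFunction_iff_forall_turnsAt_traversal hp hm hconn]
  refine ⟨fun hturn => ⟨upperArcsTurn_of_forall_traversal hp hm hconn hturn,
    lowerArcsTurn_of_forall_traversal hp hm hconn hturn⟩, fun ⟨hupper, hlower⟩ i hin => ?_⟩
  rcases Nat.even_or_odd i with hi | hi
  · rw [matchingAt_of_even hi, turnAt_of_even hi]
    exact hlower _
  · rw [matchingAt_of_odd hi, turnAt_of_odd hi]
    exact hupper _ (traversal_ne_last hp hm hconn hi.pos hin.le)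
      ((traversal_succ_of_odd hi).symm.trans_ne (traversal_ne_last hp hm hconn i.succ_pos hin))

lemma IsMatching.isNoncrossingMatchingOn {M : Fin (n + 1) → Fin (n + 1)} (hM : IsMatching M)
    (hnc : Noncrossing M) {S : Finset (Fin (n + 1))} (hS : ∀ x ∈ S, M x ∈ S) :
    IsNoncrossingMatchingOn S M := by
  refine ⟨hS, fun x _ => hM.1 x, fun x _ => hM.2 x, fun p _ x _ hx => ?_⟩
  have hnc' : ∀ a c, a < c → c < M a → ¬ M a < M c := fun a c hac hca hMac =>
    hnc ⟨a, c, hac, hca, hMac⟩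
  have hMp := hM.1 p
  have hMx := hM.1 x
  rw [mem_uIoo_iff] at hx ⊢
  grind

theorem meanderGraph_connected (hp : IsMatching Mp) (hpnc : Noncrossing Mp) (hm : IsMatching Mm)
    (hmnc : Noncrossing Mm) (hupper : UpperArcsTurn θ Mp) (hlower : LowerArcsTurn θ Mm) :
    (meanderGraph Mp Mm).Connected := by
  classical
  let S : Finset (Fin (n + 1)) := {x | ¬ (meanderGraph Mp Mm).Reachable (Fin.last n) x}
  have hS : ∀ x, x ∈ S ↔ ¬ (meanderGraph Mp Mm).Reachable (Fin.last n) x := by simp [S]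
  have hS_adj : ∀ x ∈ S, ∀ y, (meanderGraph Mp Mm).Adj x y → y ∈ S := by
    intro x hx y hadj
    rw [hS] at hx ⊢
    exact fun hy => hx (hy.trans hadj.symm.reachable)
  have hSp : ∀ x ∈ S, Mp x ∈ S := fun x hx =>
    hS_adj x hx _ ((meanderGraph_adj_iff hp hm).2 (Or.inl rfl))
  have hSm : ∀ x ∈ S, Mm x ∈ S := fun x hx =>
    hS_adj x hx _ ((meanderGraph_adj_iff hp hm).2 (Or.inr rfl))
  have hlast : Fin.last n ∉ S := by simp [hS]
  have hempty : S = ∅ :=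
    eq_empty_of_turnsAt (add_self_eq_zero.not.2 Real.pi_ne_zero)
      (hp.isNoncrossingMatchingOn hpnc hSp) (hm.isNoncrossingMatchingOn hmnc hSm)
      (fun x hx => hupper x (ne_of_mem_of_not_mem hx hlast)
        (ne_of_mem_of_not_mem (hSp x hx) hlast)) (fun x _ => hlower x)
  rw [SimpleGraph.connected_iff_exists_forall_reachable]
  refine ⟨Fin.last n, fun x => ?_⟩
  by_contra hx
  simpa [hempty] using (hS x).2 hx

theorem isMeander_and_isWindingFunction_iff :
    IsMeander Mp Mm ∧ IsWindingFunction Mp Mm θ ↔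
      (IsMatching Mp ∧ Noncrossing Mp ∧ UpperArcsTurn θ Mp) ∧
        (IsMatching Mm ∧ Noncrossing Mm ∧ LowerArcsTurn θ Mm) := by
  constructor
  · rintro ⟨⟨hp, hpnc, hm, hmnc, hconn⟩, hθ⟩
    obtain ⟨hupper, hlower⟩ := (isWindingFunction_iff hp hm hconn).1 hθ
    exact ⟨⟨hp, hpnc, hupper⟩, hm, hmnc, hlower⟩
  · rintro ⟨⟨hp, hpnc, hupper⟩, hm, hmnc, hlower⟩
    have hconn := meanderGraph_connected hp hpnc hm hmnc hupper hlower
    exact ⟨⟨hp, hpnc, hm, hmnc, hconn⟩, (isWindingFunction_iff hp hm hconn).2 ⟨hupper, hlower⟩⟩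

end Winding

end Meander

open Meander in
/-- **Product structure of meanders with a given winding function.** If
`(M⁺, N⁻)` and `(N⁺, M⁻)` are meanders of size `m` with the same winding function
`θ₀`, then so is `(M⁺, M⁻)`.  Consequently, the set of meanders of size `m` with
winding function `θ₀` is the product set `S⁺ × S⁻`, where `S⁺` (resp. `S⁻`) is the
set of upper (resp. lower) matchings occurring in some such meander. -/
theorem meanders_with_winding_product_structure
    (m n : ℕ) (hm : 1 ≤ m) (hn : n = 2 * m - 1)
    (θ₀ : Fin n → ℝ)
    (Mp Mm Np Nm : Fin (n + 1) → Fin (n + 1))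
    (h1 : IsMeander Mp Nm ∧ IsWindingFunction Mp Nm θ₀)
    (h2 : IsMeander Np Mm ∧ IsWindingFunction Np Mm θ₀) :
    (IsMeander Mp Mm ∧ IsWindingFunction Mp Mm θ₀) ∧
    {p : (Fin (n + 1) → Fin (n + 1)) × (Fin (n + 1) → Fin (n + 1)) |
        IsMeander p.1 p.2 ∧ IsWindingFunction p.1 p.2 θ₀} =
      {A : Fin (n + 1) → Fin (n + 1) |
          ∃ B, IsMeander A B ∧ IsWindingFunction A B θ₀} ×ˢ
        {B : Fin (n + 1) → Fin (n + 1) |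
          ∃ A, IsMeander A B ∧ IsWindingFunction A B θ₀} := by
  have hcombine : ∀ {A A' B B' : Fin (n + 1) → Fin (n + 1)},
      IsMeander A B' ∧ IsWindingFunction A B' θ₀ → IsMeander A' B ∧ IsWindingFunction A' B θ₀ →
        IsMeander A B ∧ IsWindingFunction A B θ₀ := by
    intro A A' B B' hA hB
    rw [isMeander_and_isWindingFunction_iff] at hA hB ⊢
    exact ⟨hA.1, hB.2⟩
  refine ⟨hcombine h1 h2, Set.ext fun ⟨A, B⟩ => ⟨fun hAB => ⟨⟨B, hAB⟩, A, hAB⟩, ?_⟩⟩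
  rintro ⟨⟨B', hA⟩, A', hB⟩
  exact hcombine hA hB
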